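/- Let H be a real inner product space, d a positive integer, λ > 0, g ∈ H and h = (h₁,…,h_d) ∈ H^d. Define Σ ∈ ℝ^{d×d} by Σ_{jk} = ⟨h_j, h_k⟩ + (1/λ)·1{j=k} and Φ ∈ ℝ^d by Φ_j = ⟨g, h_j⟩, and set θ̂ = Σ^{−1}Φ. Then ‖θ̂‖₂² ≤ λ Φᵀ Σ^{−1} Φ and Φᵀ Σ^{−1} Φ ≤ ‖g‖². -/

import Mathlib

open Matrix

/-- `Σ_{jk} = ⟨h_j, h_k⟩ + (1/λ)·1{j=k}`. -/
noncomputable def ridgeMat {H : Type*} [NormedAddCommGroup H] [InnerProductSpace ℝ H]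
    {d : ℕ} (lam : ℝ) (h : Fin d → H) : Matrix (Fin d) (Fin d) ℝ :=
  Matrix.of fun j k => (inner ℝ (h j) (h k) : ℝ) + if j = k then 1 / lam else 0

/-- `Φ_j = ⟨g, h_j⟩`. -/
noncomputable def ridgeVec {H : Type*} [NormedAddCommGroup H] [InnerProductSpace ℝ H]
    {d : ℕ} (g : H) (h : Fin d → H) : Fin d → ℝ :=
  fun j => (inner ℝ g (h j) : ℝ)

/-!
Put `S = ∑ i, θ i • h i` and `c = 1 / λ`. Pairing the normal equations `(gram h + c • 1) θ = Φ` with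
`θ` gives `Φᵀ θ = ‖S‖² + c ‖θ‖²`, hence the first bound `c ‖θ‖² ≤ Φᵀ θ`. Since `Φᵀ θ = ⟪g, S⟫`,
expanding the square turns this into `‖g - S‖² + c ‖θ‖² = ‖g‖² - Φᵀ θ`: the minimal value of the
ridge objective is `‖g‖² - Φᵀ Σ⁻¹ Φ`, and it is nonnegative.
-/

section RegularizedGram

open RCLike
open scoped ComplexOrder InnerProductSpace

variable {𝕜 E ι : Type*} [RCLike 𝕜] [SeminormedAddCommGroup E] [InnerProductSpace 𝕜 E]

theorem posDef_gram_add_smul_one [Finite ι] [DecidableEq ι] (v : ι → E) {c : ℝ}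
    (hc : 0 < c) : (gram 𝕜 v + c • (1 : Matrix ι ι 𝕜)).PosDef :=
  (PosDef.one.smul hc).posSemidef_add (posSemidef_gram 𝕜 v)

variable [Fintype ι]

theorem star_inner_dotProduct (v : ι → E) (g : E) (x : ι → 𝕜) :
    star (fun i ↦ ⟪v i, g⟫_𝕜) ⬝ᵥ x = ⟪g, ∑ i, x i • v i⟫_𝕜 := by
  simp only [dotProduct, Pi.star_apply, star_def, inner_conj_symm, inner_sum, inner_smul_right,
    mul_comm]

variable [DecidableEq ι]

theorem star_dotProduct_gram_add_smul_one_mulVec (v : ι → E) (c : ℝ) (x : ι → 𝕜) :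
    star x ⬝ᵥ ((gram 𝕜 v + c • (1 : Matrix ι ι 𝕜)) *ᵥ x) =
      ((‖∑ i, x i • v i‖ ^ 2 + c * ∑ i, ‖x i‖ ^ 2 : ℝ) : 𝕜) := by
  have star_dotProduct_self : star x ⬝ᵥ x = ((∑ i, ‖x i‖ ^ 2 : ℝ) : 𝕜) := by
    simp [dotProduct, RCLike.conj_mul]
  rw [add_mulVec, smul_mulVec, one_mulVec, dotProduct_add, dotProduct_smul,
    star_dotProduct_gram_mulVec, star_dotProduct_self, inner_self_eq_norm_sq_to_K,
    real_smul_eq_coe_mul]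
  push_cast
  rfl

theorem re_inner_sum_eq_of_normal_equations {v : ι → E} {c : ℝ} {g : E} {x : ι → 𝕜}
    (hx : (gram 𝕜 v + c • (1 : Matrix ι ι 𝕜)) *ᵥ x = fun i ↦ ⟪v i, g⟫_𝕜) :
    re ⟪g, ∑ i, x i • v i⟫_𝕜 = ‖∑ i, x i • v i‖ ^ 2 + c * ∑ i, ‖x i‖ ^ 2 := by
  rw [← star_inner_dotProduct, ← hx, star_dotProduct, star_dotProduct_gram_add_smul_one_mulVec,
    star_def, conj_re, ofReal_re]

theorem norm_sub_sum_sq_add_eq_of_normal_equations {v : ι → E} {c : ℝ} {g : E} {x : ι → 𝕜}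
    (hx : (gram 𝕜 v + c • (1 : Matrix ι ι 𝕜)) *ᵥ x = fun i ↦ ⟪v i, g⟫_𝕜) :
    ‖g - ∑ i, x i • v i‖ ^ 2 + c * ∑ i, ‖x i‖ ^ 2 =
      ‖g‖ ^ 2 - re ⟪g, ∑ i, x i • v i⟫_𝕜 := by
  rw [norm_sub_sq (𝕜 := 𝕜)]
  linarith [re_inner_sum_eq_of_normal_equations hx]

theorem stmt_15_general {lam : ℝ} (hlam : 0 < lam) (g : E) (h : ι → E) {Φ θ : ι → 𝕜}
    (hΦ : Φ = fun i ↦ ⟪h i, g⟫_𝕜) (hθ : θ = (gram 𝕜 h + (1 / lam) • 1)⁻¹ *ᵥ Φ) :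
    ∑ i, ‖θ i‖ ^ 2 ≤ lam * re (star Φ ⬝ᵥ θ) ∧ re (star Φ ⬝ᵥ θ) ≤ ‖g‖ ^ 2 := by
  have hc : 0 < 1 / lam := one_div_pos.mpr hlam
  have normal_equations : (gram 𝕜 h + (1 / lam) • 1) *ᵥ θ = fun i ↦ ⟪h i, g⟫_𝕜 := by
    rw [hθ, mulVec_mulVec, mul_nonsing_inv _ (posDef_gram_add_smul_one h hc).det_pos.ne'.isUnit,
      one_mulVec, hΦ]
  have quadratic_form := re_inner_sum_eq_of_normal_equations normal_equations
  have ridge_value := norm_sub_sum_sq_add_eq_of_normal_equations normal_equations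
  rw [hΦ, star_inner_dotProduct]
  constructor
  · rw [← div_le_iff₀' hlam, div_eq_inv_mul, ← one_div, quadratic_form]
    exact le_add_of_nonneg_left (sq_nonneg _)
  · have objective_nonneg :
        0 ≤ ‖g - ∑ i, θ i • h i‖ ^ 2 + 1 / lam * ∑ i, ‖θ i‖ ^ 2 := by positivity
    rwa [ridge_value, sub_nonneg] at objective_nonneg

end RegularizedGram

section RidgeData

variable {H : Type*} [NormedAddCommGroup H] [InnerProductSpace ℝ H] {d : ℕ}

theorem ridgeMat_eq_gram_add_smul_one (lam : ℝ) (h : Fin d → H) :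
    ridgeMat lam h = gram ℝ h + (1 / lam) • 1 := by
  ext j k
  simp [ridgeMat, one_apply]

theorem ridgeVec_eq_inner_right (g : H) (h : Fin d → H) :
    ridgeVec g h = fun j ↦ inner ℝ (h j) g :=
  funext fun j ↦ real_inner_comm (h j) g

end RidgeData

/-- With `θ̂ = Σ⁻¹Φ`, one has `‖θ̂‖₂² ≤ λ Φᵀ Σ⁻¹ Φ` and `Φᵀ Σ⁻¹ Φ ≤ ‖g‖²`. -/
theorem stmt_15 {H : Type*} [NormedAddCommGroup H] [InnerProductSpace ℝ H]
    {d : ℕ} (hd : 0 < d) (lam : ℝ) (hlam : 0 < lam) (g : H) (h : Fin d → H) :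
    (∑ j, (((ridgeMat lam h)⁻¹ *ᵥ ridgeVec g h) j) ^ 2) ≤
        lam * (ridgeVec g h ⬝ᵥ ((ridgeMat lam h)⁻¹ *ᵥ ridgeVec g h)) ∧
      ridgeVec g h ⬝ᵥ ((ridgeMat lam h)⁻¹ *ᵥ ridgeVec g h) ≤ ‖g‖ ^ 2 := by
  simpa [ridgeMat_eq_gram_add_smul_one] using
    stmt_15_general hlam g h (ridgeVec_eq_inner_right g h) rfl
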